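/- Let m : J → ℝ be differentiable on J with (^{ABC}D^α m) continuous on J. If there exists τ₀ ∈ (0,T] with m(τ₀) = 0 and m(τ) ≥ 0 for all τ ∈ [0,τ₀), then (^{ABC}D^α m)(τ₀) ≤ 0. -/

import Mathlib

/-- One-parameter Mittag-Leffler function `E_α(z) = ∑ zⁿ / Γ(nα+1)`. -/
noncomputable def mlE (α z : ℝ) : ℝ := ∑' n : ℕ, z ^ n / Real.Gamma (n * α + 1)

/-- Atangana–Baleanu–Caputo fractional derivative of order `α` (base point 0),
with normalization constant `B = B(α)`. -/
noncomputable def abcD (α B : ℝ) (m : ℝ → ℝ) (τ : ℝ) : ℝ :=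
  B / (1 - α) * ∫ σ in (0:ℝ)..τ, mlE α (-(α / (1 - α)) * (τ - σ) ^ α) * deriv m σ

/-!
The kernel `σ ↦ E_α(-L (τ - σ)^α)`, with `L = α / (1 - α)`, is positive and nondecreasing, so
integrating it by parts against `(m - m τ)'` yields only nonpositive terms when `m` attains its
minimum over `[0, τ]` at `τ`.

Monotonicity amounts to positivity of `v(t) = t^(α-1) E_{α,α}(-L t^α)`, because
`d/dt E_α(-L t^α) = -L v(t)`. Integrating the series termwise shows that `v` solves the Volterra
equation `v(t) = g(t) - L ∫₀ᵗ g(t-s) v(s) ds` with `g(t) = t^(α-1) / Γ(α)`. For `α ≤ 1` the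
function `g` is log-convex, so `g(t-s) / g(r-s) ≤ g(t) / g(r)` for `s < r < t`: from time `r` to
time `t`, the integral over `[0, r]` decays at least as fast as the forcing term. Hence `v(t)`
is at least `g(t) / g(r) * v(r)` minus the contribution of `[r, t]`, which is too small for `v`
to reach a first zero.
-/

open MeasureTheory Set Filter Topology

theorem exists_first_nonpos {f : ℝ → ℝ} {a t : ℝ} (hf : ContinuousOn f (Ioi a))
    (hfa : ∀ᶠ s in 𝓝[>] a, 0 < f s) (hat : a < t) (hft : f t ≤ 0) :
    ∃ t₀, a < t₀ ∧ f t₀ ≤ 0 ∧ ∀ s ∈ Ioo a t₀, 0 < f s := by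
  obtain ⟨b, hab, hfb⟩ := mem_nhdsGT_iff_exists_Ioc_subset.1 hfa
  have hbt : b < t := by
    by_contra! h
    exact hft.not_gt (hfb ⟨hat, h⟩)
  have hcompact : IsCompact (Icc b t ∩ f ⁻¹' Iic 0) :=
    isCompact_Icc.of_isClosed_subset
      ((hf.mono fun s hs => hab.trans_le hs.1).preimage_isClosed_of_isClosed isClosed_Icc
        isClosed_Iic) inter_subset_left
  obtain ⟨t₀, ⟨ht₀, hft₀⟩, hleast⟩ := hcompact.exists_isLeast ⟨t, ⟨hbt.le, le_rfl⟩, hft⟩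
  refine ⟨t₀, hab.trans_le ht₀.1, hft₀, fun s hs => ?_⟩
  rcases le_or_gt s b with hsb | hbs
  · exact hfb ⟨hs.1, hsb⟩
  · by_contra! hfs
    exact (hleast ⟨⟨hbs.le, hs.2.le.trans ht₀.2⟩, hfs⟩).not_gt hs.2

section Volterra

variable {k g v : ℝ → ℝ}

theorem volterra_mul_le_of_ratio {r t : ℝ} (hr : 0 < r) (hrt : r < t)
    (hratio : ∀ s ∈ Ioo 0 r, k (t - s) * g r ≤ k (r - s) * g t)
    (hint : ∀ x, 0 < x → IntervalIntegrable (fun s => k (x - s) * v s) volume 0 x)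
    (heq : ∀ x, 0 < x → v x = g x - ∫ s in 0..x, k (x - s) * v s)
    (hv : ∀ s ∈ Ioo 0 r, 0 ≤ v s) :
    g t * v r ≤ g r * (v t + ∫ s in r..t, k (t - s) * v s) := by
  have ht : 0 < t := hr.trans hrt
  have hint₁ : IntervalIntegrable (fun s => k (t - s) * v s) volume 0 r :=
    (hint t ht).mono_set (uIcc_subset_uIcc_left (mem_uIcc_of_le hr.le hrt.le))
  have hint₂ : IntervalIntegrable (fun s => k (t - s) * v s) volume r t :=
    (hint t ht).mono_set (uIcc_subset_uIcc_right (mem_uIcc_of_le hr.le hrt.le))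
  have hcompare : g r * ∫ s in 0..r, k (t - s) * v s ≤ g t * ∫ s in 0..r, k (r - s) * v s := by
    rw [← intervalIntegral.integral_const_mul, ← intervalIntegral.integral_const_mul]
    refine intervalIntegral.integral_mono_on_of_le_Ioo hr.le (hint₁.const_mul _)
      ((hint r hr).const_mul _) fun s hs => ?_
    linear_combination mul_le_mul_of_nonneg_right (hratio s hs) (hv s hs)
  rw [heq t ht, heq r hr, ← intervalIntegral.integral_add_adjacent_intervals hint₁ hint₂]
  linear_combination hcompare

theorem integral_conv_le_mul_integral {r t M : ℝ} (hrt : r ≤ t)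
    (hk : ∀ s, 0 < s → 0 ≤ k s) (hkint : IntervalIntegrable k volume 0 (t - r))
    (hint : IntervalIntegrable (fun s => k (t - s) * v s) volume r t)
    (hv : ∀ s ∈ Ioo r t, v s ≤ M) :
    ∫ s in r..t, k (t - s) * v s ≤ (∫ s in 0..t - r, k s) * M := by
  have hkint' : IntervalIntegrable (fun s => k (t - s)) volume r t := by
    simpa using (hkint.comp_sub_left t).symm
  calc ∫ s in r..t, k (t - s) * v s
      ≤ ∫ s in r..t, k (t - s) * M :=
        intervalIntegral.integral_mono_on_of_le_Ioo hrt hint (hkint'.mul_const M) fun s hs =>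
          mul_le_mul_of_nonneg_left (hv s hs) (hk _ (sub_pos.2 hs.2))
    _ = (∫ s in 0..t - r, k s) * M := by
        rw [intervalIntegral.integral_mul_const, intervalIntegral.integral_comp_sub_left, sub_self]

theorem tendsto_integral_sub_nhdsLT {t : ℝ} (ht : 0 < t) (hkint : IntervalIntegrable k volume 0 t) :
    Tendsto (fun r => ∫ s in 0..t - r, k s) (𝓝[<] t) (𝓝 0) := by
  have hprim : Tendsto (fun x => ∫ s in 0..x, k s) (𝓝[Icc 0 t] 0) (𝓝 0) := by
    have := intervalIntegral.continuousOn_primitive_interval' hkint left_mem_uIcc 0 left_mem_uIcc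
    simpa only [ContinuousWithinAt, intervalIntegral.integral_same, uIcc_of_le ht.le] using this
  refine hprim.comp (tendsto_nhdsWithin_iff.2 ⟨?_, ?_⟩)
  · exact (Continuous.tendsto' (by fun_prop) t 0 (sub_self t)).mono_left nhdsWithin_le_nhds
  · filter_upwards [Ioo_mem_nhdsLT ht] with r hr
    exact ⟨sub_nonneg.2 hr.2.le, sub_le_self t hr.1.le⟩

theorem volterra_pos_of_ratio (hk : ∀ s, 0 < s → 0 ≤ k s)
    (hkint : ∀ t, 0 < t → IntervalIntegrable k volume 0 t)
    (hg : ∀ t, 0 < t → 0 < g t) (hgc : ContinuousOn g (Ioi 0))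
    (hratio : ∀ s r t, 0 < s → s < r → r < t → k (t - s) * g r ≤ k (r - s) * g t)
    (hint : ∀ t, 0 < t → IntervalIntegrable (fun s => k (t - s) * v s) volume 0 t)
    (heq : ∀ t, 0 < t → v t = g t - ∫ s in 0..t, k (t - s) * v s)
    (hvc : ContinuousOn v (Ioi 0)) (hv₀ : ∀ᶠ s in 𝓝[>] 0, 0 < v s) {t : ℝ} (ht : 0 < t) :
    0 < v t := by
  by_contra! hvt
  obtain ⟨t₀, ht₀, hvt₀, hpos⟩ := exists_first_nonpos hvc hv₀ ht hvt
  have hlim : Tendsto (fun r => g r * ∫ s in 0..t₀ - r, k s) (𝓝[<] t₀) (𝓝 (g t₀ * 0)) :=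
    ((hgc.continuousAt (Ioi_mem_nhds ht₀)).tendsto.mono_left nhdsWithin_le_nhds).mul
      (tendsto_integral_sub_nhdsLT ht₀ (hkint t₀ ht₀))
  obtain ⟨b, hbt₀, hb⟩ : ∃ b < t₀, ∀ r ∈ Ico b t₀, 0 < r ∧ g r * ∫ s in 0..t₀ - r, k s < g t₀ :=
    mem_nhdsLT_iff_exists_Ico_subset.1 <|
      (eventually_nhdsWithin_of_eventually_nhds (lt_mem_nhds ht₀)).and
        (hlim.eventually_lt_const (by simpa using hg t₀ ht₀))
  have hb₀ : 0 < b := (hb b (left_mem_Ico.2 hbt₀)).1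
  -- At a maximum point `r` of `v` on `[b, t₀]`, the mass added on `[r, t₀]` cannot exhaust `v r`.
  obtain ⟨r, ⟨hbr, hrt₀'⟩, hmax⟩ := isCompact_Icc.exists_isMaxOn (nonempty_Icc.2 hbt₀.le)
    (hvc.mono fun s hs => hb₀.trans_le hs.1)
  have hr : 0 < r := hb₀.trans_le hbr
  have hvr : 0 < v r := (hpos b ⟨hb₀, hbt₀⟩).trans_le (hmax (left_mem_Icc.2 hbt₀.le))
  have hrt₀ : r < t₀ := hrt₀'.lt_of_ne fun h => hvt₀.not_gt (h ▸ hvr)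
  have htail : ∫ s in r..t₀, k (t₀ - s) * v s ≤ (∫ s in 0..t₀ - r, k s) * v r :=
    integral_conv_le_mul_integral hrt₀.le hk (hkint _ (sub_pos.2 hrt₀))
      ((hint t₀ ht₀).mono_set (uIcc_subset_uIcc_right (mem_uIcc_of_le hr.le hrt₀.le)))
      fun s hs => hmax ⟨hbr.trans hs.1.le, hs.2.le⟩
  have hle : g t₀ * v r < g t₀ * v r :=
    calc g t₀ * v r ≤ g r * (v t₀ + ∫ s in r..t₀, k (t₀ - s) * v s) :=
          volterra_mul_le_of_ratio hr hrt₀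
            (fun s hs => hratio s r t₀ hs.1 hs.2 hrt₀) hint heq
            fun s hs => (hpos s ⟨hs.1, hs.2.trans hrt₀⟩).le
      _ ≤ g r * (0 + (∫ s in 0..t₀ - r, k s) * v r) := by
          gcongr
          exact (hg r hr).le
      _ = (g r * ∫ s in 0..t₀ - r, k s) * v r := by ring
      _ < g t₀ * v r := by
          gcongr
          exact (hb r ⟨hbr, hrt₀⟩).2
  exact hle.false

end Volterra

theorem integral_mul_deriv_nonpos_of_isMinOn {a b : ℝ} (hab : a ≤ b) {k k' m m' : ℝ → ℝ}
    (hk : ContinuousOn k (Icc a b)) (hk' : ∀ s ∈ Ioo a b, HasDerivAt k (k' s) s)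
    (hk'_nonneg : ∀ s ∈ Ioo a b, 0 ≤ k' s) (hka : 0 ≤ k a)
    (hm : ContinuousOn m (Icc a b)) (hm' : ∀ s ∈ Ioo a b, HasDerivAt m (m' s) s)
    (hmin : IsMinOn m (Icc a b) b)
    (hint : IntervalIntegrable (fun s => k s * m' s) volume a b) :
    ∫ s in a..b, k s * m' s ≤ 0 := by
  have hmb : ∀ s ∈ Icc a b, 0 ≤ m s - m b := fun s hs => sub_nonneg.2 (hmin hs)
  calc ∫ s in a..b, k s * m' s
      ≤ k b * (m b - m b) - k a * (m a - m b) :=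
        intervalIntegral.integral_le_sub_of_hasDeriv_right_of_le hab
          (hk.mul (hm.sub continuousOn_const))
          (fun s hs => ((hk' s hs).mul ((hm' s hs).sub_const (m b))).hasDerivWithinAt)
          ((intervalIntegrable_iff_integrableOn_Icc_of_le hab).1 hint)
          (fun s hs => le_add_of_nonneg_left <|
            mul_nonneg (hk'_nonneg s hs) (hmb s (Ioo_subset_Icc_self hs)))
    _ ≤ 0 := by
        rw [sub_self, mul_zero, zero_sub, neg_nonpos]
        exact mul_nonneg hka (hmb a (left_mem_Icc.2 hab))

theorem sub_rpow_mul_rpow_le {p s r t : ℝ} (hp : p ≤ 0) (hs : 0 ≤ s) (hsr : s < r) (hrt : r ≤ t) :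
    (t - s) ^ p * r ^ p ≤ (r - s) ^ p * t ^ p := by
  have hr : 0 < r := hs.trans_lt hsr
  have hrs : 0 < r - s := sub_pos.2 hsr
  have hts : 0 < t - s := hrs.trans_le (sub_le_sub_right hrt s)
  rw [← Real.mul_rpow hts.le hr.le, ← Real.mul_rpow hrs.le (hr.le.trans hrt)]
  refine Real.rpow_le_rpow_of_nonpos (mul_pos hrs (hr.trans_le hrt)) ?_ hp
  linear_combination mul_le_mul_of_nonneg_left hrt hs

theorem exp_neg_mul_rpow_le_Gamma {K x : ℝ} (hK : 0 < K) (hx : 1 ≤ x) :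
    Real.exp (-K) * K ^ (x - 1) ≤ Real.Gamma x := by
  have hconv := Real.GammaIntegral_convergent (zero_lt_one.trans_le hx)
  calc Real.exp (-K) * K ^ (x - 1)
      = ∫ t in Ioi K, Real.exp (-t) * K ^ (x - 1) := by
        rw [integral_mul_const, integral_exp_neg_Ioi]
    _ ≤ ∫ t in Ioi K, Real.exp (-t) * t ^ (x - 1) := by
        refine setIntegral_mono_on ((integrableOn_exp_neg_Ioi K).mul_const _)
          (hconv.mono_set (Ioi_subset_Ioi hK.le)) measurableSet_Ioi fun t (ht : K < t) => ?_
        gcongr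
    _ ≤ ∫ t in Ioi 0, Real.exp (-t) * t ^ (x - 1) := by
        refine setIntegral_mono_set hconv ?_ (Ioi_subset_Ioi hK.le).eventuallyLE
        filter_upwards [ae_restrict_mem measurableSet_Ioi] with t (ht : 0 < t)
        positivity
    _ = Real.Gamma x := (Real.Gamma_eq_integral (zero_lt_one.trans_le hx)).symm

theorem integral_sub_rpow_mul_rpow {p q t : ℝ} (hp : 0 < p) (hq : 0 < q) (ht : 0 < t) :
    ∫ s in 0..t, (t - s) ^ (q - 1) * s ^ (p - 1)
      = t ^ (p + q - 1) * (Real.Gamma p * Real.Gamma q / Real.Gamma (p + q)) := by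
  apply Complex.ofReal_injective
  calc ((∫ s in 0..t, (t - s) ^ (q - 1) * s ^ (p - 1) : ℝ) : ℂ)
      = ∫ s in 0..t, (s : ℂ) ^ ((p : ℂ) - 1) * ((t : ℂ) - s) ^ ((q : ℂ) - 1) := by
        rw [← intervalIntegral.integral_ofReal]
        refine intervalIntegral.integral_congr fun s hs => ?_
        rw [uIcc_of_le ht.le] at hs
        rw [Complex.ofReal_mul, Complex.ofReal_cpow hs.1, Complex.ofReal_cpow (sub_nonneg.2 hs.2)]
        push_cast
        ring
    _ = ((t ^ (p + q - 1) * (Real.Gamma p * Real.Gamma q / Real.Gamma (p + q)) : ℝ) : ℂ) := by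
        rw [Complex.betaIntegral_scaled _ _ ht,
          Complex.betaIntegral_eq_Gamma_mul_div _ _ (by simpa) (by simpa)]
        push_cast [Complex.ofReal_cpow ht.le, ← Complex.Gamma_ofReal]
        rfl

theorem intervalIntegrable_sub_rpow_mul_rpow {p q t : ℝ} (hp : 0 < p) (hq : 0 < q) (ht : 0 < t) :
    IntervalIntegrable (fun s => (t - s) ^ (q - 1) * s ^ (p - 1)) volume 0 t := by
  apply intervalIntegral.intervalIntegrable_of_integral_ne_zero
  rw [integral_sub_rpow_mul_rpow hp hq ht]
  have := Real.Gamma_pos_of_pos hp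
  have := Real.Gamma_pos_of_pos hq
  have := Real.Gamma_pos_of_pos (add_pos hp hq)
  positivity

/-- Two-parameter Mittag-Leffler function `E_{α,β}(z) = ∑ zⁿ / Γ(nα+β)`. The case `β = α` expresses
the derivative of `t ↦ E_α(c t^α)`. -/
noncomputable def mlE₂ (α β z : ℝ) : ℝ := ∑' n : ℕ, z ^ n / Real.Gamma (n * α + β)

theorem mlE₂_one (α : ℝ) : mlE₂ α 1 = mlE α := rfl

section MittagLeffler

variable {α β : ℝ}

theorem summable_pow_div_Gamma (hα : 0 < α) (β z : ℝ) :
    Summable fun n : ℕ => z ^ n / Real.Gamma (n * α + β) := by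
  obtain ⟨K, hzK, hK⟩ : ∃ K : ℝ, |z| < K ^ α ∧ 0 < K :=
    (((tendsto_rpow_atTop hα).eventually_gt_atTop |z|).and (eventually_gt_atTop 0)).exists
  have hgeom : Summable fun n : ℕ => Real.exp K * K ^ (1 - β) * (|z| / K ^ α) ^ n :=
    (summable_geometric_of_lt_one (by positivity)
      ((div_lt_one (by positivity)).2 hzK)).mul_left _
  refine hgeom.of_norm_bounded_eventually_nat ?_
  have htop : Tendsto (fun n : ℕ => n * α + β) atTop atTop :=
    tendsto_atTop_add_const_right _ _ (tendsto_natCast_atTop_atTop.atTop_mul_const hα)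
  filter_upwards [htop.eventually_ge_atTop 1] with n hn
  have hrpow : K ^ (n * α + β - 1) = (K ^ α) ^ n / K ^ (1 - β) := by
    rw [← Real.rpow_mul_natCast hK.le, ← Real.rpow_sub hK]
    ring_nf
  have hGamma := exp_neg_mul_rpow_le_Gamma hK hn
  calc ‖z ^ n / Real.Gamma (n * α + β)‖ = |z| ^ n / Real.Gamma (n * α + β) := by
        rw [norm_div, norm_pow, Real.norm_eq_abs,
          Real.norm_of_nonneg (Real.Gamma_nonneg_of_nonneg (by linarith))]
    _ ≤ |z| ^ n / (Real.exp (-K) * K ^ (n * α + β - 1)) := by gcongr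
    _ = Real.exp K * K ^ (1 - β) * (|z| / K ^ α) ^ n := by
        rw [hrpow, Real.exp_neg, div_pow]
        field_simp

theorem continuous_mlE₂ (hα : 0 < α) (β : ℝ) : Continuous (mlE₂ α β) := by
  refine continuous_iff_continuousAt.2 fun z => ?_
  have hball : ContinuousOn (mlE₂ α β) (Metric.ball 0 (|z| + 1)) := by
    refine continuousOn_tsum (fun n => by fun_prop)
      (summable_pow_div_Gamma hα β (|z| + 1)).norm fun n x hx => ?_
    rw [norm_div, norm_div, norm_pow, norm_pow, Real.norm_of_nonneg (by positivity : 0 ≤ |z| + 1)]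
    gcongr
    exact (mem_ball_zero_iff.1 hx).le
  exact hball.continuousAt (Metric.isOpen_ball.mem_nhds (by simp))

theorem mlE₂_eq_inv_Gamma_add (hα : 0 < α) (β z : ℝ) :
    mlE₂ α β z = (Real.Gamma β)⁻¹ + z * mlE₂ α (α + β) z := by
  unfold mlE₂
  rw [(summable_pow_div_Gamma hα β z).tsum_eq_zero_add, ← tsum_mul_left]
  congr 1
  · simp
  · refine tsum_congr fun n => ?_
    rw [pow_succ', mul_div_assoc, Nat.cast_succ, add_one_mul, add_assoc]

theorem mlE₂_zero (hα : 0 < α) (β : ℝ) : mlE₂ α β 0 = (Real.Gamma β)⁻¹ := by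
  rw [mlE₂_eq_inv_Gamma_add hα, zero_mul, add_zero]

/-- The weighted Mittag-Leffler function `t^(β-1) E_{α,β}(c t^α)`, meant for `t > 0`. The weight is
chosen so that fractional integration of order `q` shifts `β` to `β + q`. -/
noncomputable def mlKernel (α β c t : ℝ) : ℝ := t ^ (β - 1) * mlE₂ α β (c * t ^ α)

variable {c t : ℝ}

theorem mlKernel_one (α c t : ℝ) : mlKernel α 1 c t = mlE α (c * t ^ α) := by
  simp only [mlKernel, sub_self, Real.rpow_zero, one_mul, mlE₂_one]

theorem hasSum_mlKernel (hα : 0 < α) (β c : ℝ) (ht : 0 < t) :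
    HasSum (fun n : ℕ => c ^ n / Real.Gamma (n * α + β) * t ^ (n * α + β - 1))
      (mlKernel α β c t) := by
  refine ((summable_pow_div_Gamma hα β (c * t ^ α)).hasSum.mul_left (t ^ (β - 1))).congr_fun
    fun n => ?_
  have hrpow : t ^ (n * α + β - 1) = t ^ (β - 1) * (t ^ α) ^ n := by
    rw [← Real.rpow_mul_natCast ht.le, ← Real.rpow_add ht]
    ring_nf
  rw [hrpow, mul_pow]
  ring

theorem mlKernel_eq_rpow_div_Gamma_add (hα : 0 < α) (β c : ℝ) (ht : 0 < t) :
    mlKernel α β c t = t ^ (β - 1) / Real.Gamma β + c * mlKernel α (α + β) c t := by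
  rw [mlKernel, mlE₂_eq_inv_Gamma_add hα, mlKernel, add_sub_assoc, Real.rpow_add ht]
  ring

theorem continuous_mlE₂_mul_rpow (hα : 0 < α) (β c : ℝ) :
    Continuous fun s : ℝ => mlE₂ α β (c * s ^ α) :=
  (continuous_mlE₂ hα β).comp (continuous_const.mul (Real.continuous_rpow_const hα.le))

theorem continuousOn_mlKernel (hα : 0 < α) (β c : ℝ) : ContinuousOn (mlKernel α β c) (Ioi 0) :=
  (continuousOn_id.rpow_const fun _ hs => Or.inl (ne_of_gt hs)).mul
    (continuous_mlE₂_mul_rpow hα β c).continuousOn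

theorem continuous_mlE_mul_rpow (hα : 0 < α) (c : ℝ) :
    Continuous fun s : ℝ => mlE α (c * s ^ α) :=
  mlE₂_one α ▸ continuous_mlE₂_mul_rpow hα 1 c

theorem eventually_mlKernel_pos (hα : 0 < α) (hβ : 0 < β) (c : ℝ) :
    ∀ᶠ s in 𝓝[>] 0, 0 < mlKernel α β c s := by
  have hlim : Tendsto (fun s : ℝ => mlE₂ α β (c * s ^ α)) (𝓝 0) (𝓝 (Real.Gamma β)⁻¹) :=
    (continuous_mlE₂_mul_rpow hα β c).tendsto' _ _ <| by
      rw [Real.zero_rpow hα.ne', mul_zero, mlE₂_zero hα]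
  have hpos := hlim.eventually_const_lt (inv_pos.2 (Real.Gamma_pos_of_pos hβ))
  filter_upwards [nhdsWithin_le_nhds hpos, self_mem_nhdsWithin] with s hs hs₀
  exact mul_pos (Real.rpow_pos_of_pos hs₀ _) hs

variable {q : ℝ}

theorem intervalIntegrable_sub_rpow_mul_mlKernel (hα : 0 < α) (hβ : 0 < β) (hq : 0 < q) (c : ℝ)
    (ht : 0 < t) :
    IntervalIntegrable (fun s => (t - s) ^ (q - 1) * mlKernel α β c s) volume 0 t := by
  refine ((intervalIntegrable_sub_rpow_mul_rpow hβ hq ht).mul_continuousOn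
    (continuous_mlE₂_mul_rpow hα β c).continuousOn).congr fun s _ => ?_
  exact mul_assoc _ _ _

theorem intervalIntegrable_mlKernel (hα : 0 < α) (hβ : 0 < β) (c : ℝ) (ht : 0 < t) :
    IntervalIntegrable (mlKernel α β c) volume 0 t := by
  simpa using intervalIntegrable_sub_rpow_mul_mlKernel hα hβ one_pos c ht

theorem integral_sub_rpow_mul_mlKernel (hα : 0 < α) (hβ : 0 < β) (hq : 0 < q) (c : ℝ)
    (ht : 0 < t) :
    ∫ s in 0..t, (t - s) ^ (q - 1) * mlKernel α β c s
      = Real.Gamma q * mlKernel α (β + q) c t := by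
  let term (c : ℝ) (n : ℕ) (s : ℝ) : ℝ :=
    c ^ n / Real.Gamma (n * α + β) * ((t - s) ^ (q - 1) * s ^ (n * α + β - 1))
  have hnβ (n : ℕ) : 0 < n * α + β := by positivity
  have hterm_int (n : ℕ) : IntegrableOn (term c n) (Ioc 0 t) :=
    ((intervalIntegrable_iff_integrableOn_Ioc_of_le ht.le).1
      (intervalIntegrable_sub_rpow_mul_rpow (hnβ n) hq ht)).const_mul _
  have hterm_eq (c : ℝ) (n : ℕ) : ∫ s in Ioc 0 t, term c n s = Real.Gamma q *
      (c ^ n / Real.Gamma (n * α + (β + q)) * t ^ (n * α + (β + q) - 1)) := by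
    have := (Real.Gamma_pos_of_pos (hnβ n)).ne'
    rw [integral_const_mul, ← intervalIntegral.integral_of_le ht.le,
      integral_sub_rpow_mul_rpow (hnβ n) hq ht, ← add_assoc]
    field_simp
  have hterm_norm (n : ℕ) : ∫ s in Ioc 0 t, ‖term c n s‖ = ∫ s in Ioc 0 t, term |c| n s := by
    refine setIntegral_congr_fun measurableSet_Ioc fun s hs => ?_
    have := sub_nonneg.2 hs.2
    have := hs.1
    rw [norm_mul, norm_div, norm_pow, Real.norm_eq_abs,
      Real.norm_of_nonneg (Real.Gamma_pos_of_pos (hnβ n)).le, Real.norm_of_nonneg (by positivity)]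
  have hterm_sum : ∀ s ∈ Ioc 0 t, ∑' n, term c n s = (t - s) ^ (q - 1) * mlKernel α β c s := by
    intro s hs
    rw [← (hasSum_mlKernel hα β c hs.1).tsum_eq, ← tsum_mul_left]
    exact tsum_congr fun n => mul_left_comm _ _ _
  have hsum : HasSum (fun n => ∫ s in Ioc 0 t, term c n s) (∫ s in Ioc 0 t, ∑' n, term c n s) := by
    refine hasSum_integral_of_summable_integral_norm hterm_int ?_
    simp only [hterm_norm, hterm_eq]
    exact (hasSum_mlKernel hα (β + q) |c| ht).summable.mul_left _
  simp only [hterm_eq] at hsum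
  rw [intervalIntegral.integral_of_le ht.le, ← setIntegral_congr_fun measurableSet_Ioc hterm_sum]
  exact hsum.unique ((hasSum_mlKernel hα (β + q) c ht).mul_left _)

theorem mlKernel_volterra (hα : 0 < α) (c : ℝ) (ht : 0 < t) :
    mlKernel α α c t = t ^ (α - 1) / Real.Gamma α
      - ∫ s in 0..t, -c / Real.Gamma α * (t - s) ^ (α - 1) * mlKernel α α c s := by
  have := (Real.Gamma_pos_of_pos hα).ne'
  simp only [mul_assoc, intervalIntegral.integral_const_mul]
  rw [integral_sub_rpow_mul_mlKernel hα hα hα c ht, mlKernel_eq_rpow_div_Gamma_add hα α c ht]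
  field_simp
  ring

theorem mlKernel_self_pos (hα : 0 < α) (hα₁ : α ≤ 1) (hc : c ≤ 0) (ht : 0 < t) :
    0 < mlKernel α α c t := by
  have hΓ : 0 < Real.Gamma α := Real.Gamma_pos_of_pos hα
  have hcΓ : 0 ≤ -c / Real.Gamma α := div_nonneg (neg_nonneg.2 hc) hΓ.le
  refine volterra_pos_of_ratio (k := fun s => -c / Real.Gamma α * s ^ (α - 1))
    (g := fun s => s ^ (α - 1) / Real.Gamma α) (fun s hs => by positivity) (fun t _ => ?_)
    (fun t ht => by positivity) ?_ (fun s r t hs hsr hrt => ?_) (fun t ht => ?_)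
    (fun t ht => mlKernel_volterra hα c ht) (continuousOn_mlKernel hα α c)
    (eventually_mlKernel_pos hα hα c) ht
  · exact (intervalIntegral.intervalIntegrable_rpow' (by linarith)).const_mul _
  · exact (continuousOn_id.rpow_const fun _ hs => Or.inl (ne_of_gt hs)).div_const _
  · have := mul_le_mul_of_nonneg_left
      (sub_rpow_mul_rpow_le (sub_nonpos.2 hα₁) hs.le hsr hrt.le) (div_nonneg hcΓ hΓ.le)
    linear_combination this
  · simpa only [mul_assoc] using
      (intervalIntegrable_sub_rpow_mul_mlKernel hα hα hα c ht).const_mul (-c / Real.Gamma α)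

theorem mlE_mul_rpow_eq (hα : 0 < α) (c : ℝ) (ht : 0 < t) :
    mlE α (c * t ^ α) = 1 + c * ∫ s in 0..t, mlKernel α α c s := by
  have hint : ∫ s in 0..t, mlKernel α α c s = mlKernel α (α + 1) c t := by
    simpa using integral_sub_rpow_mul_mlKernel hα hα one_pos c ht
  rw [hint, ← mlKernel_one, mlKernel_eq_rpow_div_Gamma_add hα 1 c ht]
  simp

theorem hasDerivAt_mlE_mul_rpow (hα : 0 < α) (c : ℝ) (ht : 0 < t) :
    HasDerivAt (fun t => mlE α (c * t ^ α)) (c * mlKernel α α c t) t := by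
  have hcont := continuousOn_mlKernel hα α c
  have hprim := intervalIntegral.integral_hasDerivAt_right (intervalIntegrable_mlKernel hα hα c ht)
    (hcont.stronglyMeasurableAtFilter isOpen_Ioi t ht) (hcont.continuousAt (Ioi_mem_nhds ht))
  refine ((hprim.const_mul c).const_add 1).congr_of_eventuallyEq ?_
  filter_upwards [Ioi_mem_nhds ht] with s hs using mlE_mul_rpow_eq hα c hs

theorem rpow_mul_integral_mlKernel_le (hα : 0 < α) (hα₁ : α ≤ 1) (hc : c ≤ 0) (ht : 0 < t) :
    t ^ (α - 1) * ∫ s in 0..t, mlKernel α α c s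
      ≤ ∫ s in 0..t, (t - s) ^ (α - 1) * mlKernel α α c s := by
  rw [← intervalIntegral.integral_const_mul]
  refine intervalIntegral.integral_mono_on_of_le_Ioo ht.le
    ((intervalIntegrable_mlKernel hα hα c ht).const_mul _)
    (intervalIntegrable_sub_rpow_mul_mlKernel hα hα hα c ht) fun s hs => ?_
  refine mul_le_mul_of_nonneg_right ?_ (mlKernel_self_pos hα hα₁ hc hs.1).le
  exact Real.rpow_le_rpow_of_nonpos (sub_pos.2 hs.2) (sub_le_self t hs.1.le) (sub_nonpos.2 hα₁)

theorem mlE_mul_rpow_pos (hα : 0 < α) (hα₁ : α ≤ 1) (hc : c ≤ 0) (ht : 0 < t) :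
    0 < mlE α (c * t ^ α) := by
  have hΓ : 0 < Real.Gamma α := Real.Gamma_pos_of_pos hα
  refine pos_of_mul_pos_right (a := t ^ (α - 1)) ?_ (by positivity)
  calc 0 < Real.Gamma α * mlKernel α α c t := mul_pos hΓ (mlKernel_self_pos hα hα₁ hc ht)
    _ = t ^ (α - 1) + c * ∫ s in 0..t, (t - s) ^ (α - 1) * mlKernel α α c s := by
        rw [mlKernel_eq_rpow_div_Gamma_add hα α c ht, integral_sub_rpow_mul_mlKernel hα hα hα c ht]
        field_simp
    _ ≤ t ^ (α - 1) + c * (t ^ (α - 1) * ∫ s in 0..t, mlKernel α α c s) := by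
        gcongr t ^ (α - 1) + ?_
        exact mul_le_mul_of_nonpos_left (rpow_mul_integral_mlKernel_le hα hα₁ hc ht) hc
    _ = t ^ (α - 1) * mlE α (c * t ^ α) := by
        rw [mlE_mul_rpow_eq hα c ht]
        ring

theorem mlE_pos_of_nonpos (hα : 0 < α) (hα₁ : α ≤ 1) {z : ℝ} (hz : z ≤ 0) : 0 < mlE α z := by
  rcases hz.eq_or_lt with rfl | hz
  · rw [← mlE₂_one, mlE₂_zero hα, Real.Gamma_one, inv_one]
    exact one_pos
  · have hpos : 0 < (-z) ^ α⁻¹ := Real.rpow_pos_of_pos (neg_pos.2 hz) _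
    simpa [Real.rpow_inv_rpow (neg_pos.2 hz).le hα.ne'] using
      mlE_mul_rpow_pos hα hα₁ (neg_one_lt_zero (R := ℝ)).le hpos

end MittagLeffler

theorem abc_deriv_nonpos_at_zero_from_above_general {α B τ : ℝ} {m : ℝ → ℝ} (hα : 0 < α)
    (hα₁ : α < 1) (hB : 0 ≤ B) (hτ : 0 ≤ τ) (hm : ContinuousOn m (Icc 0 τ))
    (hm' : ∀ σ ∈ Ioo 0 τ, DifferentiableAt ℝ m σ) (hmin : IsMinOn m (Icc 0 τ) τ) :
    abcD α B m τ ≤ 0 := by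
  have hc : -(α / (1 - α)) ≤ 0 := neg_nonpos.2 (div_nonneg hα.le (sub_pos.2 hα₁).le)
  have hB' : 0 ≤ B / (1 - α) := div_nonneg hB (sub_pos.2 hα₁).le
  refine mul_nonpos_of_nonneg_of_nonpos hB' ?_
  set c := -(α / (1 - α))
  by_cases hint : IntervalIntegrable (fun σ => mlE α (c * (τ - σ) ^ α) * deriv m σ) volume 0 τ
  · refine integral_mul_deriv_nonpos_of_isMinOn hτ
      (k' := fun σ => -(c * mlKernel α α c (τ - σ))) ?_ (fun σ hσ => ?_) (fun σ hσ => ?_) ?_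
      hm (fun σ hσ => (hm' σ hσ).hasDerivAt) hmin hint
    · exact ((continuous_mlE_mul_rpow hα c).comp (continuous_const.sub continuous_id)).continuousOn
    · exact (hasDerivAt_mlE_mul_rpow hα c (sub_pos.2 hσ.2)).comp_const_sub τ σ
    · exact neg_nonneg.2 (mul_nonpos_of_nonpos_of_nonneg hc
        (mlKernel_self_pos hα hα₁.le hc (sub_pos.2 hσ.2)).le)
    · exact (mlE_pos_of_nonpos hα hα₁.le (mul_nonpos_of_nonpos_of_nonneg hc
        (Real.rpow_nonneg (sub_nonneg.2 hτ) α))).le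
  · -- The Bochner integral of a non-integrable function is `0`.
    exact (intervalIntegral.integral_undef hint).le

theorem abc_deriv_nonpos_at_zero_from_above
    (T α B : ℝ) (hT : 0 < T) (hα : 0 < α) (hα1 : α < 1) (hB : 0 < B)
    (m : ℝ → ℝ)
    (hmdiff : ∀ τ ∈ Set.Icc (0:ℝ) T, DifferentiableAt ℝ m τ)
    (hcont : ContinuousOn (abcD α B m) (Set.Icc (0:ℝ) T))
    (τ₀ : ℝ) (hτ₀ : τ₀ ∈ Set.Ioc (0:ℝ) T)
    (hm0 : m τ₀ = 0)
    (hpos : ∀ τ ∈ Set.Ico (0:ℝ) τ₀, 0 ≤ m τ) :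
    abcD α B m τ₀ ≤ 0 := by
  have hdiff : ∀ τ ∈ Icc 0 τ₀, DifferentiableAt ℝ m τ := fun τ hτ =>
    hmdiff τ ⟨hτ.1, hτ.2.trans hτ₀.2⟩
  have hmin : IsMinOn m (Icc 0 τ₀) τ₀ := fun τ hτ =>
    hτ.2.eq_or_lt.elim (fun h => (congrArg m h).ge) fun h => hm0.trans_le (hpos τ ⟨hτ.1, h⟩)
  exact abc_deriv_nonpos_at_zero_from_above_general hα hα1 hB.le hτ₀.1.le
    (fun τ hτ => (hdiff τ hτ).continuousAt.continuousWithinAt)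
    (fun τ hτ => hdiff τ (Ioo_subset_Icc_self hτ)) hmin
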